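/- Let (A,I) be a commutative pair, let (H,Jh) together with φ:(A,I)→(H,Jh) be a left Henselization of (A,I), let J be the two-sided ideal of H generated by all commutators [H,H], and let q:H→H/J be the quotient map (so J ⊆ Jh). Then the commutative pair (H/J, Jh/J) together with the morphism q∘φ:(A,I)→(H/J, Jh/J) is a commutative Henselization of (A,I): (H/J, Jh/J) is a Henselian commutative pair, and for every morphism of pairs ψ0:(A,I)→(B,K) with B commutative and (B,K) Henselian, there exists a unique morphism of pairs ψ:(H/J, Jh/J)→(B,K) with ψ0 = ψ∘(q∘φ). -/

import Mathlib

open Polynomial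

universe u

/-- A morphism of pairs `(A,I) → (B,J)`: a ring homomorphism `φ : A → B` with
`φ ⁻¹(J) = I`. -/
def IsPairHom {A B : Type*} [Ring A] [Ring B] (I : TwoSidedIdeal A)
    (J : TwoSidedIdeal B) (φ : A →+* B) : Prop :=
  ∀ a : A, φ a ∈ J ↔ a ∈ I

/-- The commutator filtration of the pair `(A,I)`, indexed from `0`:
`commFilt I 0 = I^(1) = I` and `commFilt I (n+1) = I^(n+2)` is the two-sided ideal
generated by the commutators `[A, I^(n+1)]`. -/
def commFilt {A : Type*} [Ring A] (I : TwoSidedIdeal A) : ℕ → TwoSidedIdeal A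
  | 0 => I
  | n + 1 => TwoSidedIdeal.span {x | ∃ a b : A, b ∈ commFilt I n ∧ x = a * b - b * a}

/-- A pair `(A,I)` is perfect if the intersection of its commutator filtration is `{0}`. -/
def IsPerfectPair {A : Type*} [Ring A] (I : TwoSidedIdeal A) : Prop :=
  ∀ x : A, (∀ n, x ∈ commFilt I n) → x = 0

/-- A pair `(A,I)` is a Jacobson pair if `I` is contained in the Jacobson radical of `A`;
for a two-sided ideal this is equivalent to `1 + a` being a unit for every `a ∈ I`. -/
def IsJacobsonPair {A : Type*} [Ring A] (I : TwoSidedIdeal A) : Prop :=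
  ∀ a ∈ I, IsUnit (1 + a)

/-- `f₁, f₂ ∈ A[x]` are left coprime: `A[x]f₁ + A[x]f₂ = A[x]`, equivalently there are
`g₁, g₂` with `g₁f₁ + g₂f₂ = 1`. -/
def LeftCoprime {A : Type*} [Semiring A] (f1 f2 : A[X]) : Prop :=
  ∃ g1 g2 : A[X], g1 * f1 + g2 * f2 = 1

/-- A pair `(A,I)` is left Henselian: it is a Jacobson pair, and every factorization of
the reduction of a monic polynomial into left coprime monic factors lifts uniquely. -/
def IsLeftHenselianPair {A : Type*} [Ring A] (I : TwoSidedIdeal A) : Prop :=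
  IsJacobsonPair I ∧
  ∀ F : A[X], F.Monic →
    ∀ f1 f2 : (I.ringCon.Quotient)[X], f1.Monic → f2.Monic → LeftCoprime f1 f2 →
      F.map (I.ringCon.mk') = f1 * f2 →
      ∃! p : A[X] × A[X], p.1.Monic ∧ p.2.Monic ∧ F = p.1 * p.2 ∧
        p.1.map I.ringCon.mk' = f1 ∧ p.2.map I.ringCon.mk' = f2

/-- A ring homomorphism is local if it sends every nonunit to a nonunit. -/
def RingHomIsLocal {A B : Type*} [Ring A] [Ring B] (φ : A →+* B) : Prop :=
  ∀ a : A, ¬ IsUnit a → ¬ IsUnit (φ a)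

/-- `φ : (A,I) → (H,J)` is a left Henselization of the perfect pair `(A,I)`:
`(H,J)` is a perfect left Henselian pair and every morphism of pairs from `(A,I)` to a
perfect left Henselian pair factors uniquely through `φ`. -/
def IsLeftHenselization {A H : Type u} [Ring A] [Ring H] (I : TwoSidedIdeal A)
    (J : TwoSidedIdeal H) (φ : A →+* H) : Prop :=
  IsPairHom I J φ ∧ IsPerfectPair J ∧ IsLeftHenselianPair J ∧
  ∀ (B : Type u) (_ : Ring B) (K : TwoSidedIdeal B) (ψ0 : A →+* B),
    IsPairHom I K ψ0 → IsPerfectPair K → IsLeftHenselianPair K →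
    ∃! ψ : H →+* B, IsPairHom J K ψ ∧ ψ0 = ψ.comp φ

/-!
Write `J` for the commutator ideal of `H`. The subring `S = φ(A) + Jh` of `H` contains `Jh`, which
makes `(S, Jh)` again a perfect left Henselian pair; the universal property of `H` then forces
`S = H`. Hence `H / Jh` is a quotient of `A`, so it is commutative and `J ≤ Jh`. It follows that
`H / J` and `H` have the same residue ring, and factorizations lift to `H / J` through `H`. They
lift uniquely because, in a commutative Jacobson pair, monic polynomials which are coprime modulo
the ideal are coprime: their resultant is a unit modulo the ideal. Finally, a morphism from `H` to a
commutative ring kills `J`, so the universal property of `H` passes to `H / J`.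
-/

section Quotient

variable {A B : Type*} [Ring A] [Ring B] {I : TwoSidedIdeal A} {J : TwoSidedIdeal B} {f : A →+* B}

theorem quotient_mk_eq_zero_iff {x : A} : I.ringCon.mk' x = 0 ↔ x ∈ I := by
  rw [← TwoSidedIdeal.mem_ker, TwoSidedIdeal.ker_ringCon_mk']

theorem quotient_mk_eq_mk_iff {x y : A} : I.ringCon.mk' x = I.ringCon.mk' y ↔ x - y ∈ I := by
  rw [← sub_eq_zero, ← map_sub, quotient_mk_eq_zero_iff]

/-- The ring homomorphism `A / I → B` induced by `f : A → B` with `I ≤ ker f`. -/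
def quotientLift (f : A →+* B) (h : I ≤ TwoSidedIdeal.ker f) : I.ringCon.Quotient →+* B :=
  I.ringCon.lift f (TwoSidedIdeal.ringCon_le_iff.1 h)

theorem quotientLift_mk (h : I ≤ TwoSidedIdeal.ker f) (x : A) :
    quotientLift f h (I.ringCon.mk' x) = f x :=
  rfl

theorem quotientLift_injective (h : I ≤ TwoSidedIdeal.ker f) (hker : TwoSidedIdeal.ker f ≤ I) :
    Function.Injective (quotientLift f h) :=
  RingCon.lift_injective_iff.2
    (congrArg TwoSidedIdeal.ringCon (le_antisymm h hker))

namespace IsPairHom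

theorem ker_mk_comp (hf : IsPairHom I J f) : TwoSidedIdeal.ker (J.ringCon.mk'.comp f) = I :=
  TwoSidedIdeal.ext fun a => by
    rw [TwoSidedIdeal.mem_ker, RingHom.comp_apply, quotient_mk_eq_zero_iff, hf a]

/-- The ring homomorphism `A / I → B / J` induced by a morphism of pairs `(A, I) → (B, J)`. -/
def quotientMap (hf : IsPairHom I J f) : I.ringCon.Quotient →+* J.ringCon.Quotient :=
  quotientLift (J.ringCon.mk'.comp f) hf.ker_mk_comp.ge

theorem quotientMap_mk (hf : IsPairHom I J f) (x : A) :
    hf.quotientMap (I.ringCon.mk' x) = J.ringCon.mk' (f x) :=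
  rfl

theorem quotientMap_injective (hf : IsPairHom I J f) : Function.Injective hf.quotientMap :=
  quotientLift_injective _ hf.ker_mk_comp.le

theorem quotientMap_surjective (hf : IsPairHom I J f) (hsurj : Function.Surjective f) :
    Function.Surjective hf.quotientMap :=
  RingCon.lift_surjective_of_surjective _ (J.ringCon.mk'_surjective.comp hsurj)

theorem map_map_mk (hf : IsPairHom I J f) (P : A[X]) :
    (P.map f).map J.ringCon.mk' = (P.map I.ringCon.mk').map hf.quotientMap := by
  rw [Polynomial.map_map, Polynomial.map_map]
  rfl

end IsPairHom

theorem isPairHom_mk_map {L : TwoSidedIdeal A} (h : I ≤ L) :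
    IsPairHom L (TwoSidedIdeal.map I.ringCon.mk' L) I.ringCon.mk' := by
  intro a
  refine ⟨fun ha => ?_, fun ha => TwoSidedIdeal.subset_span ⟨a, ha, rfl⟩⟩
  let toQuotient : I.ringCon.Quotient →+* L.ringCon.Quotient :=
    quotientLift L.ringCon.mk' (h.trans L.ker_ringCon_mk'.ge)
  have map_le_ker : TwoSidedIdeal.map I.ringCon.mk' L ≤ TwoSidedIdeal.ker toQuotient := by
    refine TwoSidedIdeal.span_le.2 ?_
    rintro _ ⟨x, hx, rfl⟩
    exact (TwoSidedIdeal.mem_ker _).2 (quotient_mk_eq_zero_iff.2 hx)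
  exact quotient_mk_eq_zero_iff.1 ((TwoSidedIdeal.mem_ker _).1 (map_le_ker ha))

end Quotient

section CommutatorIdeal

/-- The two-sided ideal of `R` generated by all commutators; the quotient by it is the largest
commutative quotient of `R`. -/
def commutatorIdeal (R : Type*) [Ring R] : TwoSidedIdeal R :=
  TwoSidedIdeal.span {x | ∃ a b : R, x = a * b - b * a}

variable {R S : Type*} [Ring R]

theorem commutatorIdeal_le_ker_iff [Ring S] {f : R →+* S} :
    commutatorIdeal R ≤ TwoSidedIdeal.ker f ↔ ∀ a b, f a * f b = f b * f a := by
  have mem_ker_iff (a b : R) :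
      a * b - b * a ∈ TwoSidedIdeal.ker f ↔ f a * f b = f b * f a := by
    rw [TwoSidedIdeal.mem_ker, map_sub, map_mul, map_mul, sub_eq_zero]
  rw [commutatorIdeal, TwoSidedIdeal.span_le]
  constructor
  · exact fun h a b => (mem_ker_iff a b).1 (h ⟨a, b, rfl⟩)
  · rintro h _ ⟨a, b, rfl⟩
    exact (mem_ker_iff a b).2 (h a b)

theorem commutatorIdeal_le_ker [CommRing S] (f : R →+* S) :
    commutatorIdeal R ≤ TwoSidedIdeal.ker f :=
  commutatorIdeal_le_ker_iff.2 fun _ _ => mul_comm _ _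

theorem commutatorIdeal_eq_bot (S : Type*) [CommRing S] : commutatorIdeal S = ⊥ :=
  le_bot_iff.1 ((commutatorIdeal_le_ker (RingHom.id S)).trans_eq
    ((TwoSidedIdeal.ker_eq_bot _).2 Function.injective_id))

theorem commutatorIdeal_quotient_mul_comm (x y : (commutatorIdeal R).ringCon.Quotient) :
    x * y = y * x := by
  obtain ⟨a, rfl⟩ := RingCon.mk'_surjective _ x
  obtain ⟨b, rfl⟩ := RingCon.mk'_surjective _ y
  exact commutatorIdeal_le_ker_iff.1 (TwoSidedIdeal.ker_ringCon_mk' _).ge a b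

end CommutatorIdeal

section PerfectPair

variable {A B : Type*}

theorem commFilt_le_comap [Ring A] [Ring B] {I : TwoSidedIdeal A} {J : TwoSidedIdeal B}
    {f : A →+* B} (hf : I ≤ J.comap f) (n : ℕ) : commFilt I n ≤ (commFilt J n).comap f := by
  induction n with
  | zero => exact hf
  | succ n ih =>
    refine TwoSidedIdeal.span_le.2 ?_
    rintro _ ⟨a, b, hb, rfl⟩
    refine (TwoSidedIdeal.mem_comap f).2 (TwoSidedIdeal.subset_span ?_)
    exact ⟨f a, f b, (TwoSidedIdeal.mem_comap f).1 (ih hb), by rw [map_sub, map_mul, map_mul]⟩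

theorem IsPerfectPair.of_injective [Ring A] [Ring B] {I : TwoSidedIdeal A} {J : TwoSidedIdeal B}
    {f : A →+* B} (hJ : IsPerfectPair J) (hf : I ≤ J.comap f) (hinj : Function.Injective f) :
    IsPerfectPair I := fun x hx =>
  (map_eq_zero_iff f hinj).1 <| hJ (f x) fun n =>
    (TwoSidedIdeal.mem_comap f).1 (commFilt_le_comap hf n (hx n))

theorem isPerfectPair_of_commRing [CommRing A] (I : TwoSidedIdeal A) : IsPerfectPair I := by
  intro x hx
  have commFilt_one_le : commFilt I 1 ≤ commutatorIdeal A :=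
    TwoSidedIdeal.span_mono fun _ ⟨a, b, _, hab⟩ => ⟨a, b, hab⟩
  exact (TwoSidedIdeal.mem_bot A).1
    ((commFilt_one_le.trans_eq (commutatorIdeal_eq_bot A)) (hx 1))

end PerfectPair

section JacobsonPair

variable {A B : Type*} [Ring A] [Ring B] {I : TwoSidedIdeal A} {J : TwoSidedIdeal B} {f : A →+* B}

theorem IsJacobsonPair.isLocalHom_mk (hI : IsJacobsonPair I) : IsLocalHom I.ringCon.mk' := by
  have isUnit_of_mk_eq_one {c : A} (hc : I.ringCon.mk' c = 1) : IsUnit c := by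
    rw [← map_one I.ringCon.mk', quotient_mk_eq_mk_iff] at hc
    simpa only [add_sub_cancel] using hI _ hc
  refine ⟨fun a ha => ?_⟩
  obtain ⟨b', hab, hba⟩ := isUnit_iff_exists.1 ha
  obtain ⟨b, rfl⟩ := I.ringCon.mk'_surjective b'
  obtain ⟨r, hr⟩ := (isUnit_of_mk_eq_one ((map_mul _ a b).trans hab)).exists_right_inv
  obtain ⟨l, hl⟩ := (isUnit_of_mk_eq_one ((map_mul _ b a).trans hba)).exists_left_inv
  exact isUnit_iff_exists_and_exists.2 ⟨⟨b * r, by rwa [← mul_assoc]⟩, ⟨l * b, by rwa [mul_assoc]⟩⟩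

theorem IsJacobsonPair.of_injective (hJ : IsJacobsonPair J) (hf : IsPairHom I J f)
    (hinj : Function.Injective f) (hrange : ∀ b ∈ J, b ∈ f.range) : IsJacobsonPair I := by
  intro a ha
  obtain ⟨u, hu⟩ := hJ (f a) ((hf a).2 ha)
  have inv_eq : (↑u⁻¹ : B) = 1 - ↑u⁻¹ * f a := by
    have h : (↑u⁻¹ : B) * (1 + f a) = 1 := hu ▸ u.inv_mul
    rw [mul_add, mul_one] at h
    exact eq_sub_of_add_eq h
  obtain ⟨b, hb⟩ : (↑u⁻¹ : B) ∈ f.range := by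
    rw [inv_eq]
    exact sub_mem (one_mem _) (hrange _ (J.mul_mem_left _ _ ((hf a).2 ha)))
  have hfu : f (1 + a) = u := by rw [map_add, map_one, hu]
  refine isUnit_iff_exists.2 ⟨b, hinj ?_, hinj ?_⟩
  · rw [map_mul, hfu, hb, u.mul_inv, map_one]
  · rw [map_mul, hfu, hb, u.inv_mul, map_one]

theorem IsJacobsonPair.of_surjective (hI : IsJacobsonPair I) (hf : IsPairHom I J f)
    (hsurj : Function.Surjective f) : IsJacobsonPair J := by
  intro b hb
  obtain ⟨a, rfl⟩ := hsurj b
  rw [← map_one f, ← map_add]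
  exact (hI a ((hf a).1 hb)).map f

end JacobsonPair

section FactorLift

/-- `p` is a lift to `A[X]` of the factorization `f₁ * f₂` of `F` modulo `I`, i.e. a solution of the
lifting problem in `IsLeftHenselianPair`. -/
def IsFactorLift {A : Type*} [Ring A] (I : TwoSidedIdeal A) (F : A[X])
    (f₁ f₂ : I.ringCon.Quotient[X]) (p : A[X] × A[X]) : Prop :=
  p.1.Monic ∧ p.2.Monic ∧ F = p.1 * p.2 ∧
    p.1.map I.ringCon.mk' = f₁ ∧ p.2.map I.ringCon.mk' = f₂

section Ring

variable {A B : Type*} [Ring A] [Ring B] {I : TwoSidedIdeal A} {J : TwoSidedIdeal B} {f : A →+* B}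
  {F : A[X]} {f₁ f₂ : I.ringCon.Quotient[X]} {p : A[X] × A[X]}

theorem IsFactorLift.map (hp : IsFactorLift I F f₁ f₂ p) (hf : IsPairHom I J f) :
    IsFactorLift J (F.map f) (f₁.map hf.quotientMap) (f₂.map hf.quotientMap)
      (p.1.map f, p.2.map f) := by
  obtain ⟨hmonic₁, hmonic₂, rfl, rfl, rfl⟩ := hp
  exact ⟨hmonic₁.map f, hmonic₂.map f, Polynomial.map_mul f, hf.map_map_mk _, hf.map_map_mk _⟩

theorem IsFactorLift.of_map (hf : IsPairHom I J f) (hinj : Function.Injective f)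
    (hp : IsFactorLift J (F.map f) (f₁.map hf.quotientMap) (f₂.map hf.quotientMap)
      (p.1.map f, p.2.map f)) :
    IsFactorLift I F f₁ f₂ p := by
  obtain ⟨hmonic₁, hmonic₂, hF, hf₁, hf₂⟩ := hp
  have hquot := Polynomial.map_injective _ hf.quotientMap_injective
  exact ⟨monic_of_injective hinj hmonic₁, monic_of_injective hinj hmonic₂,
    Polynomial.map_injective f hinj (by rw [hF, Polynomial.map_mul]),
    hquot (by rw [← hf.map_map_mk, hf₁]), hquot (by rw [← hf.map_map_mk, hf₂])⟩

theorem IsPairHom.mem_lifts_of_map_mk_eq (hf : IsPairHom I J f) (hrange : ∀ b ∈ J, b ∈ f.range)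
    {P : B[X]} {g : I.ringCon.Quotient[X]} (hP : P.map J.ringCon.mk' = g.map hf.quotientMap) :
    P ∈ lifts f := by
  refine (lifts_iff_coeff_lifts P).2 fun n => ?_
  obtain ⟨a, ha⟩ := I.ringCon.mk'_surjective (g.coeff n)
  have coeff_sub_mem : P.coeff n - f a ∈ J := by
    rw [← quotient_mk_eq_mk_iff, ← coeff_map, hP, coeff_map, ← ha, hf.quotientMap_mk]
  have := add_mem (hrange _ coeff_sub_mem) ⟨a, rfl⟩
  rwa [sub_add_cancel] at this

theorem LeftCoprime.map {R S : Type*} [Semiring R] [Semiring S] {g₁ g₂ : R[X]}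
    (h : LeftCoprime g₁ g₂) (φ : R →+* S) : LeftCoprime (g₁.map φ) (g₂.map φ) := by
  obtain ⟨c₁, c₂, hc⟩ := h
  refine ⟨c₁.map φ, c₂.map φ, ?_⟩
  rw [← Polynomial.map_mul, ← Polynomial.map_mul, ← Polynomial.map_add, hc, Polynomial.map_one]

end Ring

theorem nontrivial_codomain_of_isLocalHom {R S : Type*} [Semiring R] [Semiring S] (φ : R →+* S)
    [IsLocalHom φ] [Nontrivial R] : Nontrivial S := by
  by_contra hS
  rw [not_nontrivial_iff_subsingleton] at hS
  exact not_isUnit_zero (IsUnit.of_map φ 0 (isUnit_of_subsingleton _))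

theorem isCoprime_of_isCoprime_map {R S : Type*} [CommRing R] [CommRing S] (φ : R →+* S)
    [IsLocalHom φ] {p q : R[X]} (hp : p.Monic) (h : IsCoprime (p.map φ) (q.map φ)) :
    IsCoprime p q := by
  rcases subsingleton_or_nontrivial R with _ | _
  · exact ⟨0, 0, Subsingleton.elim _ _⟩
  have := nontrivial_codomain_of_isLocalHom φ
  have resultant_map : resultant (p.map φ) (q.map φ) = φ (resultant p q) := by
    rw [← resultant_map_map, ← Nat.add_sub_cancel' (natDegree_map_le (f := φ) (p := q)),
      resultant_add_right_deg _ _ _ _ _ le_rfl, hp.natDegree_map φ, coeff_map, hp.coeff_natDegree,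
      map_one, one_pow, one_mul]
  rw [← isUnit_resultant_iff_isCoprime hp]
  rw [← isUnit_resultant_iff_isCoprime (hp.map φ), resultant_map] at h
  exact h.of_map

theorem IsFactorLift.unique {A : Type*} [CommRing A] {I : TwoSidedIdeal A} (hI : IsJacobsonPair I)
    {F : A[X]} {f₁ f₂ : I.ringCon.Quotient[X]} (hcop : LeftCoprime f₁ f₂) {p q : A[X] × A[X]}
    (hp : IsFactorLift I F f₁ f₂ p) (hq : IsFactorLift I F f₁ f₂ q) : p = q := by
  nontriviality A
  have := hI.isLocalHom_mk
  have := nontrivial_codomain_of_isLocalHom I.ringCon.mk'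
  obtain ⟨hp₁, -, rfl, hpf₁, -⟩ := hp
  obtain ⟨hq₁, -, hpq, hqf₁, hqf₂⟩ := hq
  have coprime : IsCoprime p.1 q.2 :=
    isCoprime_of_isCoprime_map I.ringCon.mk' hp₁ (by rw [hpf₁, hqf₂]; exact hcop)
  have dvd : p.1 ∣ q.1 := coprime.dvd_of_dvd_mul_right (hpq ▸ dvd_mul_right _ _)
  have natDegree_eq : q.1.natDegree = p.1.natDegree := by
    rw [← hq₁.natDegree_map I.ringCon.mk', ← hp₁.natDegree_map I.ringCon.mk', hqf₁, hpf₁]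
  have fst_eq : p.1 = q.1 :=
    (eq_of_monic_of_dvd_of_natDegree_le hp₁ hq₁ dvd natDegree_eq.le).symm
  rw [← fst_eq] at hpq
  exact Prod.ext fst_eq (hp₁.isRegular.left hpq)

end FactorLift

section LeftHenselianPair

variable {A B : Type*} [Ring A] {I : TwoSidedIdeal A}

theorem IsLeftHenselianPair.of_injective [Ring B] {J : TwoSidedIdeal B} {f : A →+* B}
    (hJ : IsLeftHenselianPair J) (hf : IsPairHom I J f) (hinj : Function.Injective f)
    (hrange : ∀ b ∈ J, b ∈ f.range) : IsLeftHenselianPair I := by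
  refine ⟨hJ.1.of_injective hf hinj hrange, fun F hF f₁ f₂ hf₁ hf₂ hcop hFf => ?_⟩
  obtain ⟨⟨P₁, P₂⟩, hP, hP_unique⟩ := hJ.2 (F.map f) (hF.map f) _ _ (hf₁.map hf.quotientMap)
    (hf₂.map hf.quotientMap) (hcop.map _) (by rw [hf.map_map_mk, hFf, Polynomial.map_mul])
  obtain ⟨p₁, rfl⟩ := (mem_lifts _).1 (hf.mem_lifts_of_map_mk_eq hrange hP.2.2.2.1)
  obtain ⟨p₂, rfl⟩ := (mem_lifts _).1 (hf.mem_lifts_of_map_mk_eq hrange hP.2.2.2.2)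
  refine ⟨(p₁, p₂), IsFactorLift.of_map hf hinj hP, fun q hq => ?_⟩
  have map_eq := Prod.ext_iff.1 (hP_unique _ (IsFactorLift.map hq hf))
  exact Prod.ext (Polynomial.map_injective f hinj map_eq.1)
    (Polynomial.map_injective f hinj map_eq.2)

theorem IsLeftHenselianPair.exists_isFactorLift_of_surjective [Ring B] {J : TwoSidedIdeal B}
    {f : A →+* B} (hI : IsLeftHenselianPair I) (hf : IsPairHom I J f)
    (hsurj : Function.Surjective f) {F : B[X]} (hF : F.Monic) {f₁ f₂ : J.ringCon.Quotient[X]}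
    (hf₁ : f₁.Monic) (hf₂ : f₂.Monic) (hcop : LeftCoprime f₁ f₂)
    (hFf : F.map J.ringCon.mk' = f₁ * f₂) : ∃ p, IsFactorLift J F f₁ f₂ p := by
  let e : I.ringCon.Quotient ≃+* J.ringCon.Quotient :=
    RingEquiv.ofBijective hf.quotientMap ⟨hf.quotientMap_injective, hf.quotientMap_surjective hsurj⟩
  let inv : J.ringCon.Quotient →+* I.ringCon.Quotient := e.symm
  have inv_comp : inv.comp hf.quotientMap = RingHom.id _ := RingHom.ext e.symm_apply_apply
  have comp_inv : hf.quotientMap.comp inv = RingHom.id _ := RingHom.ext e.apply_symm_apply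
  obtain ⟨G, rfl, -, hG⟩ :=
    lifts_and_natDegree_eq_and_monic (mem_lifts_of_surjective hsurj F) hF
  have hGf : G.map I.ringCon.mk' = f₁.map inv * f₂.map inv := by
    rw [← Polynomial.map_mul, ← hFf, hf.map_map_mk, Polynomial.map_map, inv_comp, Polynomial.map_id]
  obtain ⟨p, hp, -⟩ := hI.2 G hG _ _ (hf₁.map inv) (hf₂.map inv) (hcop.map inv) hGf
  have hp_map := IsFactorLift.map hp hf
  simp only [Polynomial.map_map, comp_inv, Polynomial.map_id] at hp_map
  exact ⟨_, hp_map⟩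

theorem IsLeftHenselianPair.of_surjective [CommRing B] {J : TwoSidedIdeal B} {f : A →+* B}
    (hI : IsLeftHenselianPair I) (hf : IsPairHom I J f) (hsurj : Function.Surjective f) :
    IsLeftHenselianPair J := by
  have hJ : IsJacobsonPair J := hI.1.of_surjective hf hsurj
  refine ⟨hJ, fun F hF f₁ f₂ hf₁ hf₂ hcop hFf => ?_⟩
  obtain ⟨p, hp⟩ := hI.exists_isFactorLift_of_surjective hf hsurj hF hf₁ hf₂ hcop hFf
  exact ⟨p, hp, fun q hq => IsFactorLift.unique hJ hcop hq hp⟩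

theorem IsLeftHenselianPair.map_mk_commutatorIdeal (hI : IsLeftHenselianPair I)
    (hle : commutatorIdeal A ≤ I) :
    IsLeftHenselianPair (TwoSidedIdeal.map (commutatorIdeal A).ringCon.mk' I) :=
  letI : CommRing (commutatorIdeal A).ringCon.Quotient :=
    { (inferInstance : Ring (commutatorIdeal A).ringCon.Quotient) with
      mul_comm := commutatorIdeal_quotient_mul_comm }
  hI.of_surjective (isPairHom_mk_map hle) (RingCon.mk'_surjective _)

end LeftHenselianPair

namespace IsLeftHenselization

variable {A H : Type u} [Ring A] [Ring H] {I : TwoSidedIdeal A} {J : TwoSidedIdeal H} {φ : A →+* H}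

theorem eq_top_of_range_le (hH : IsLeftHenselization I J φ) {S : Subring H} (hφS : φ.range ≤ S)
    (hJS : ∀ x ∈ J, x ∈ S) : S = ⊤ := by
  obtain ⟨hφ, hperf, hhens, huniv⟩ := hH
  have hS : IsPairHom (J.comap S.subtype) J S.subtype := fun _ => (TwoSidedIdeal.mem_comap _).symm
  let φS : A →+* S := φ.codRestrict S fun a => hφS ⟨a, rfl⟩
  have hφS_pair : IsPairHom I (J.comap S.subtype) φS := fun a =>
    (TwoSidedIdeal.mem_comap _).trans (hφ a)
  have hS_perf := hperf.of_injective (f := S.subtype) le_rfl S.subtype_injective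
  have hS_hens := hhens.of_injective hS S.subtype_injective (by simpa using hJS)
  obtain ⟨ψ, ⟨hψ, hψφ⟩, -⟩ := huniv S inferInstance _ φS hφS_pair hS_perf hS_hens
  have subtype_comp : S.subtype.comp ψ = RingHom.id H := by
    refine (huniv H inferInstance J φ hφ hperf hhens).unique ⟨?_, ?_⟩ ⟨fun _ => Iff.rfl, rfl⟩
    · exact fun x => (hS (ψ x)).trans (hψ x)
    · rw [RingHom.comp_assoc, ← hψφ]
      rfl
  refine (Subring.eq_top_iff' S).2 fun x => ?_
  have hx : (ψ x : H) = x := RingHom.congr_fun subtype_comp x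
  exact hx ▸ (ψ x).2

theorem surjective_mk_comp (hH : IsLeftHenselization I J φ) :
    Function.Surjective (J.ringCon.mk'.comp φ) := by
  have comap_eq_top : (J.ringCon.mk'.comp φ).range.comap J.ringCon.mk' = ⊤ := by
    refine hH.eq_top_of_range_le ?_ fun x hx => ⟨0, ?_⟩
    · rintro _ ⟨a, rfl⟩
      exact ⟨a, rfl⟩
    · rw [map_zero, quotient_mk_eq_zero_iff.2 hx]
  intro y
  obtain ⟨x, rfl⟩ := J.ringCon.mk'_surjective y
  exact (Subring.eq_top_iff' _).1 comap_eq_top x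

theorem commutatorIdeal_le (hH : IsLeftHenselization I J φ) (hI : commutatorIdeal A ≤ I) :
    commutatorIdeal H ≤ J := by
  have comm_image : ∀ a b : A, J.ringCon.mk'.comp φ a * J.ringCon.mk'.comp φ b =
      J.ringCon.mk'.comp φ b * J.ringCon.mk'.comp φ a :=
    commutatorIdeal_le_ker_iff.1 (hI.trans hH.1.ker_mk_comp.ge)
  rw [← J.ker_ringCon_mk', commutatorIdeal_le_ker_iff]
  intro x y
  obtain ⟨a, ha⟩ := hH.surjective_mk_comp (J.ringCon.mk' x)
  obtain ⟨b, hb⟩ := hH.surjective_mk_comp (J.ringCon.mk' y)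
  rw [← ha, ← hb, comm_image]

theorem existsUnique_comp_mk_commutatorIdeal (hH : IsLeftHenselization I J φ)
    (hle : commutatorIdeal H ≤ J) {B : Type u} [CommRing B] {K : TwoSidedIdeal B} {ψ₀ : A →+* B}
    (hψ₀ : IsPairHom I K ψ₀) (hK : IsLeftHenselianPair K) :
    ∃! ψ : (commutatorIdeal H).ringCon.Quotient →+* B,
      IsPairHom (TwoSidedIdeal.map (commutatorIdeal H).ringCon.mk' J) K ψ ∧
        ψ₀ = ψ.comp ((commutatorIdeal H).ringCon.mk'.comp φ) := by
  have hmk := isPairHom_mk_map hle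
  obtain ⟨χ, ⟨hχ, hχφ⟩, hχ_unique⟩ :=
    hH.2.2.2 B inferInstance K ψ₀ hψ₀ (isPerfectPair_of_commRing K) hK
  refine ⟨quotientLift χ (commutatorIdeal_le_ker χ), ⟨?_, hχφ⟩, ?_⟩
  · refine (RingCon.mk'_surjective _).forall.2 fun x => ?_
    rw [quotientLift_mk, hmk x, hχ x]
  · rintro ψ ⟨hψ, hψφ⟩
    exact RingCon.Quotient.hom_ext
      (hχ_unique (ψ.comp _) ⟨fun x => (hψ _).trans (hmk x), hψφ⟩)

end IsLeftHenselization

theorem commutative_henselization_general {A H : Type u} [Ring A] [Ring H]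
    {I : TwoSidedIdeal A} {J : TwoSidedIdeal H} {φ : A →+* H}
    (hI : commutatorIdeal A ≤ I) (hH : IsLeftHenselization I J φ) :
    (∀ x y : (commutatorIdeal H).ringCon.Quotient, x * y = y * x) ∧
    IsLeftHenselianPair (TwoSidedIdeal.map (commutatorIdeal H).ringCon.mk' J) ∧
    ∀ (B : Type u) (_ : CommRing B) (K : TwoSidedIdeal B) (ψ₀ : A →+* B),
      IsPairHom I K ψ₀ → IsLeftHenselianPair K →
      ∃! ψ : (commutatorIdeal H).ringCon.Quotient →+* B,
        IsPairHom (TwoSidedIdeal.map (commutatorIdeal H).ringCon.mk' J) K ψ ∧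
          ψ₀ = ψ.comp ((commutatorIdeal H).ringCon.mk'.comp φ) :=
  have hle : commutatorIdeal H ≤ J := hH.commutatorIdeal_le hI
  ⟨commutatorIdeal_quotient_mul_comm, hH.2.2.1.map_mk_commutatorIdeal hle,
    fun _ _ _ _ hψ₀ hK => hH.existsUnique_comp_mk_commutatorIdeal hle hψ₀ hK⟩

/-- Proposition on commutative Henselizations: for a commutative pair
`(A,I)` with left Henselization `(H,Jh)`, the quotient of `H` by the two-sided ideal `J`
generated by all commutators, with the image ideal `Jh/J`, together with `q ∘ φ`, is a
commutative Henselization of `(A,I)`. -/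
theorem commutative_henselization {A H : Type u} [CommRing A] [Ring H]
    (I : TwoSidedIdeal A) (Jh : TwoSidedIdeal H) (φ : A →+* H)
    (hH : IsLeftHenselization I Jh φ)
    (J : TwoSidedIdeal H)
    (hJdef : J = TwoSidedIdeal.span {x : H | ∃ a b : H, x = a * b - b * a})
    (JhQ : TwoSidedIdeal J.ringCon.Quotient)
    (hJhQdef : JhQ = TwoSidedIdeal.span (J.ringCon.mk' '' (Jh : Set H))) :
    (∀ x y : J.ringCon.Quotient, x * y = y * x) ∧
    IsLeftHenselianPair JhQ ∧
    ∀ (B : Type u) (_ : CommRing B) (K : TwoSidedIdeal B) (ψ0 : A →+* B),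
      IsPairHom I K ψ0 → IsLeftHenselianPair K →
      ∃! ψ : J.ringCon.Quotient →+* B,
        IsPairHom JhQ K ψ ∧ ψ0 = ψ.comp (J.ringCon.mk'.comp φ) := by
  subst hJdef hJhQdef
  exact commutative_henselization_general ((commutatorIdeal_eq_bot A).trans_le bot_le) hH
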